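/- Let s ≥ 2 be an integer, let f be a homogeneous polynomial of degree s in d variables with rational coefficients, and let D = D(f) be the common denominator of its coefficients. Let α = (a₁/q, …, a_d/q) and β = (b₁/r, …, b_d/r) be rational vectors (q, r positive integers, a_i, b_i ∈ ℤ) with f(α − β) ≠ 0. If f(α) = A/q and f(β) = B/r for some integers A and B, then |f(α − β)| ≥ 1/(D q^{s−1} r^{s−1}). -/

import Mathlib

/-!
For an integral form `g` of positive degree, `g (x + y) - g x - g y` consists of monomials mixing
the entries of `x` with those of `y`. At `x = r a` and `y = -q b` it is therefore divisible by
`q r`, and if moreover `q ∣ g a` and `r ∣ g b`, then `q r ∣ g (r a - q b)`.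

Apply this to `g = D f`. If `f (a / q) = A / q` and `s ≥ 2`, then `D q ^ (s - 1) f (a / q)` is an
integer, which means that `q` divides `g a = q ^ s D f (a / q)`; likewise `r ∣ g b`. Hence one
factor `q r` cancels from `g (r a - q b) = (q r) ^ s D f (a / q - b / r)`, so
`D q ^ (s - 1) r ^ (s - 1) f (a / q - b / r)` is a nonzero integer.
-/

open MvPolynomial

variable {σ R K : Type*} {s : ℕ}

section CommSemiring

variable [CommSemiring R] [Semifield K] {g : MvPolynomial σ R}

lemma eval_smul_of_isHomogeneous (hg : g.IsHomogeneous s) (c : R) (x : σ → R) :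
    eval (c • x) g = c ^ s * eval x g := by
  rw [eval_eq, eval_eq, Finset.mul_sum]
  refine Finset.sum_congr rfl fun m hm => ?_
  simp only [Pi.smul_apply, smul_eq_mul, mul_pow, Finset.prod_mul_distrib,
    Finset.prod_pow_eq_pow_sum, hg.degree_eq_sum_deg_support hm]
  ring

lemma eval_zero_of_isHomogeneous (hg : g.IsHomogeneous s) (hs : s ≠ 0) : eval 0 g = 0 := by
  simpa [hs] using eval_smul_of_isHomogeneous hg 0 0

lemma pow_mul_eval_div_map (φ : R →+* K) (hg : g.IsHomogeneous s) {q : R} (hq : φ q ≠ 0)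
    (a : σ → R) : φ q ^ s * eval (fun i => φ (a i) / φ q) (map φ g) = φ (eval a g) := by
  have smul_div : φ q • (fun i => φ (a i) / φ q) = φ ∘ a :=
    funext fun i => mul_div_cancel₀ (φ (a i)) hq
  rw [← eval_smul_of_isHomogeneous (hg.map φ), smul_div, eval_map, eval₂_comp]

end CommSemiring

section CommRing

variable [CommRing R] [Field K] {g : MvPolynomial σ R}

lemma eval_sub_eval_mem_of_forall_sub_mem {I : Ideal R} {x y : σ → R} (hxy : ∀ i, x i - y i ∈ I)
    (p : MvPolynomial σ R) : eval x p - eval y p ∈ I := by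
  have comp_eq : Ideal.Quotient.mk I ∘ x = Ideal.Quotient.mk I ∘ y :=
    funext fun i => Ideal.Quotient.eq.mpr (hxy i)
  rw [← Ideal.Quotient.eq, eval₂_comp, eval₂_comp, comp_eq]

lemma eval_add_sub_eval_sub_eval_add_eval_zero_mem_mul {I J : Ideal R} {x y : σ → R}
    (hx : ∀ i, x i ∈ I) (hy : ∀ i, y i ∈ J) (p : MvPolynomial σ R) :
    eval (x + y) p - eval x p - eval y p + eval 0 p ∈ I * J := by
  induction p using MvPolynomial.induction_on with
  | C c => simp
  | add p p' hp hp' =>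
    convert! add_mem hp hp' using 1
    simp only [map_add]
    ring
  | mul_X p i _ =>
    have sub_mem_right : eval (x + y) p - eval x p ∈ J :=
      eval_sub_eval_mem_of_forall_sub_mem (by simpa using hy) p
    have sub_mem_left : eval (x + y) p - eval y p ∈ I :=
      eval_sub_eval_mem_of_forall_sub_mem (by simpa using hx) p
    convert! add_mem (Ideal.mul_mem_mul (hx i) sub_mem_right)
      (Ideal.mul_mem_mul sub_mem_left (hy i)) using 1
    simp only [map_mul, eval_X, Pi.add_apply, Pi.zero_apply]
    ring

lemma mul_dvd_eval_smul_sub_smul (hg : g.IsHomogeneous s) (hs : s ≠ 0) {q r : R} {a b : σ → R}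
    (ha : q ∣ eval a g) (hb : r ∣ eval b g) : q * r ∣ eval (r • a - q • b) g := by
  have cross_terms : q * r ∣ eval (r • a - q • b) g - r ^ s * eval a g - (-q) ^ s * eval b g := by
    have mem := eval_add_sub_eval_sub_eval_add_eval_zero_mem_mul
      (I := Ideal.span {r}) (J := Ideal.span {q}) (x := r • a) (y := (-q) • b)
      (fun i => Ideal.mem_span_singleton.mpr (by simp))
      (fun i => Ideal.mem_span_singleton.mpr (by simp)) g
    rwa [Ideal.span_singleton_mul_span_singleton, Ideal.mem_span_singleton, mul_comm r q, neg_smul,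
      ← sub_eq_add_neg, ← neg_smul, eval_smul_of_isHomogeneous hg, eval_smul_of_isHomogeneous hg,
      eval_zero_of_isHomogeneous hg hs, add_zero] at mem
  have left_term : q * r ∣ r ^ s * eval a g :=
    mul_comm q r ▸ mul_dvd_mul (dvd_pow_self r hs) ha
  have right_term : q * r ∣ (-q) ^ s * eval b g :=
    mul_dvd_mul ((dvd_neg.mpr dvd_rfl).trans (dvd_pow_self (-q) hs)) hb
  simpa using (cross_terms.add right_term).add left_term

lemma dvd_eval_of_pow_mul_eval_div_mem_range {φ : R →+* K} (hφ : Function.Injective φ)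
    (hg : g.IsHomogeneous s) (hs : s ≠ 0) {q : R} (hq : q ≠ 0) {a : σ → R}
    (ha : φ q ^ (s - 1) * eval (fun i => φ (a i) / φ q) (map φ g) ∈ φ.range) :
    q ∣ eval a g := by
  obtain ⟨A, hA⟩ := ha
  refine ⟨A, hφ ?_⟩
  rw [← pow_mul_eval_div_map φ hg ((map_ne_zero_iff φ hφ).mpr hq) a, map_mul, hA, ← mul_assoc,
    mul_pow_sub_one hs]

lemma pow_mul_pow_mul_eval_div_sub_div_mem_range {φ : R →+* K} (hφ : Function.Injective φ)
    (hg : g.IsHomogeneous s) (hs : s ≠ 0) {q r : R} (hq : q ≠ 0) (hr : r ≠ 0) {a b : σ → R}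
    (ha : φ q ^ (s - 1) * eval (fun i => φ (a i) / φ q) (map φ g) ∈ φ.range)
    (hb : φ r ^ (s - 1) * eval (fun i => φ (b i) / φ r) (map φ g) ∈ φ.range) :
    φ q ^ (s - 1) * φ r ^ (s - 1) *
      eval (fun i => φ (a i) / φ q - φ (b i) / φ r) (map φ g) ∈ φ.range := by
  obtain ⟨N, hN⟩ := mul_dvd_eval_smul_sub_smul hg hs
    (dvd_eval_of_pow_mul_eval_div_mem_range hφ hg hs hq ha)
    (dvd_eval_of_pow_mul_eval_div_mem_range hφ hg hs hr hb)
  have hφq : φ q ≠ 0 := (map_ne_zero_iff φ hφ).mpr hq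
  have hφr : φ r ≠ 0 := (map_ne_zero_iff φ hφ).mpr hr
  have hφqr : φ (q * r) ≠ 0 := by simp [hφq, hφr]
  have common_denominator : (fun i => φ (a i) / φ q - φ (b i) / φ r) =
      fun i => φ ((r • a - q • b) i) / φ (q * r) := by
    funext i
    simp only [Pi.sub_apply, Pi.smul_apply, smul_eq_mul, map_sub, map_mul]
    field_simp
  refine ⟨N, mul_left_cancel₀ hφqr ?_⟩
  rw [← map_mul, ← hN, ← pow_mul_eval_div_map φ hg hφqr, common_denominator, ← mul_pow, ← map_mul,
    ← mul_assoc, mul_pow_sub_one hs]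

end CommRing

lemma mul_mem_range_intCast_of_den_dvd {c : ℚ} {D : ℕ} (h : c.den ∣ D) :
    (D : ℚ) * c ∈ (Int.castRingHom ℚ).range := by
  obtain ⟨k, rfl⟩ := h
  refine ⟨k * c.num, ?_⟩
  rw [eq_intCast, Int.cast_mul, ← Rat.den_mul_eq_num]
  push_cast
  ring

lemma exists_map_intCast_eq_C_mul {f : MvPolynomial σ ℚ} {D : ℕ}
    (hD : ∀ m ∈ f.support, (f.coeff m).den ∣ D) :
    ∃ g : MvPolynomial σ ℤ, map (Int.castRingHom ℚ) g = C (D : ℚ) * f := by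
  refine mem_range_map_iff_coeffs_subset.mpr fun c hc => ?_
  obtain ⟨m, hm, rfl⟩ := mem_coeffs_iff.mp hc
  rw [mem_support_iff, coeff_C_mul] at hm
  rw [coeff_C_mul]
  exact mul_mem_range_intCast_of_den_dvd (hD m (mem_support_iff.mpr (right_ne_zero_of_mul hm)))

lemma lcm_den_coeff_pos (f : MvPolynomial σ ℚ) : 0 < f.support.lcm fun m => (f.coeff m).den :=
  Nat.pos_of_ne_zero fun h => by simp [Finset.lcm_eq_zero_iff] at h

theorem simplex_lemma_value_ii_general (hs : s ≠ 0) {f : MvPolynomial σ ℚ}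
    (hhom : f.IsHomogeneous s) {D : ℕ} (hD : D = f.support.lcm fun m => (f.coeff m).den)
    {q r : ℤ} (hq : 0 < q) (hr : 0 < r) {a b : σ → ℤ}
    (hne : eval (fun i => (a i : ℚ) / q - (b i : ℚ) / r) f ≠ 0) {A B : ℤ}
    (hA : D * q ^ (s - 1) * eval (fun i => (a i : ℚ) / q) f = A)
    (hB : D * r ^ (s - 1) * eval (fun i => (b i : ℚ) / r) f = B) :
    1 / ((D : ℚ) * q ^ (s - 1) * r ^ (s - 1)) ≤
      |eval (fun i => (a i : ℚ) / q - (b i : ℚ) / r) f| := by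
  obtain ⟨g, hg⟩ := exists_map_intCast_eq_C_mul (f := f) (D := D)
    fun m hm => hD ▸ Finset.dvd_lcm (f := fun m => (f.coeff m).den) hm
  have g_hom : g.IsHomogeneous s :=
    .of_map (RingHom.injective_int (Int.castRingHom ℚ)) (hg ▸ hhom.C_mul _)
  obtain ⟨N, hN⟩ := pow_mul_pow_mul_eval_div_sub_div_mem_range
    (RingHom.injective_int (Int.castRingHom ℚ)) g_hom hs hq.ne' hr.ne' (a := a) (b := b)
    ⟨A, by simp only [hg, eq_intCast, map_mul, eval_C, ← hA]; ring⟩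
    ⟨B, by simp only [hg, eq_intCast, map_mul, eval_C, ← hB]; ring⟩
  have value_eq : (D : ℚ) * q ^ (s - 1) * r ^ (s - 1) *
      eval (fun i => (a i : ℚ) / q - (b i : ℚ) / r) f = N := by
    simp only [hg, eq_intCast, map_mul, eval_C] at hN
    rw [hN]
    ring
  have D_pos : 0 < D := hD ▸ lcm_den_coeff_pos f
  have denominator_pos : (0 : ℚ) < D * q ^ (s - 1) * r ^ (s - 1) := by positivity
  have N_ne_zero : N ≠ 0 := by
    rintro rfl
    exact mul_ne_zero denominator_pos.ne' hne (by simpa using value_eq)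
  rw [div_le_iff₀' denominator_pos, ← abs_of_pos denominator_pos, ← abs_mul, value_eq]
  exact_mod_cast Int.one_le_abs N_ne_zero

/-- Inequality (13) in Lemma 1(ii): let `f` be a homogeneous polynomial of degree `s ≥ 2`
with rational coefficients and `D` the common denominator of its coefficients. If
`α = a/q`, `β = b/r` are rational vectors with `f(α - β) ≠ 0`, `f(α) = A/q` and
`f(β) = B/r` for integers `A, B`, then `|f(α - β)| ≥ 1/(D q^{s-1} r^{s-1})`. -/
theorem simplex_lemma_value_ii
    (d s : ℕ) (hs : 2 ≤ s)
    (f : MvPolynomial (Fin d) ℚ) (hhom : f.IsHomogeneous s)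
    (D : ℕ) (hD : D = f.support.lcm fun m => (f.coeff m).den)
    (q r : ℤ) (hq : 0 < q) (hr : 0 < r)
    (a b : Fin d → ℤ)
    (hne : MvPolynomial.eval (fun i => (a i : ℚ) / (q : ℚ) - (b i : ℚ) / (r : ℚ)) f ≠ 0)
    (A B : ℤ)
    (hA : MvPolynomial.eval (fun i => (a i : ℚ) / (q : ℚ)) f = (A : ℚ) / (q : ℚ))
    (hB : MvPolynomial.eval (fun i => (b i : ℚ) / (r : ℚ)) f = (B : ℚ) / (r : ℚ)) :
    |MvPolynomial.eval (fun i => (a i : ℚ) / (q : ℚ) - (b i : ℚ) / (r : ℚ)) f|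
      ≥ 1 / ((D : ℚ) * (q : ℚ) ^ (s - 1) * (r : ℚ) ^ (s - 1)) := by
  obtain ⟨t, rfl⟩ := Nat.exists_eq_add_of_le' hs
  exact simplex_lemma_value_ii_general (by simp) hhom hD hq hr hne
    (A := D * q ^ t * A) (B := D * r ^ t * B)
    (by rw [hA]; push_cast; field_simp; ring) (by rw [hB]; push_cast; field_simp; ring)
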